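/- The ideal I = ⟨σ_{k+1}, σ_{k+2}, ..., σ_n⟩ of S = ℚ[c₁,...,c_m] (where n = m+k) contains σ_p for all p > k, and as a ℚ-vector space, I has a basis consisting of all σ_λ with ℓ(λ) ≤ m and λ₁ > k. -/

import Mathlib

/-- The sequence `c = (c_1, …, c_m, 0, 0, …)` of variables of `S = ℚ[c_1, …, c_m]`,
with `c_0 = 1` and `c_i = 0` for `i < 0` or `i > m`. -/
noncomputable def cVar (m : ℕ) : ℤ → MvPolynomial (Fin m) ℚ := fun i =>
  if h : 1 ≤ i ∧ i ≤ (m : ℤ) then MvPolynomial.X ⟨(i - 1).toNat, by omega⟩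
  else if i = 0 then 1 else 0

/-- `σ_p = Δ_{(1^p)}(c) = det(c_{1+j-i})_{p×p}`, extended by `σ_p = 0` for `p < 0`. -/
noncomputable def sigmaP (m : ℕ) : ℤ → MvPolynomial (Fin m) ℚ := fun p =>
  if p < 0 then 0
  else Matrix.det (Matrix.of fun i j : Fin p.toNat => cVar m (1 + (j : ℤ) - (i : ℤ)))

/-- `σ_λ = Δ_λ(σ) = det(σ_{λ_i+j-i})`. -/
noncomputable def sigmaL (m : ℕ) {l : ℕ} (lam : Fin l → ℕ) : MvPolynomial (Fin m) ℚ :=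
  Matrix.det (Matrix.of fun i j : Fin l => sigmaP m ((lam i : ℤ) + (j : ℤ) - (i : ℤ)))

/-!
Send `c_i` to the elementary symmetric polynomial `e_i(x_1, …, x_m)`, which is injective, and put
`δ = (m - 1, …, 1, 0)`. The series `∑ σ_p t^p` becomes the inverse of `∏ (1 - x_l t)`, so, by the
bialternant formula, `σ_λ` times the alternant `a_δ` becomes `a_{λ+δ}`. Distinct alternants with
strictly decreasing exponents have distinct leading monomials, hence the `σ_λ` are independent.
Multiplying an alternant by `e_r` adds vertical strips to its exponents (Pieri's rule), so the span
of the `σ_λ` with `λ_1 > k` is stable under multiplication by each `c_r`, that is, an ideal. It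
contains the generators `σ_p = σ_{(p)}`, and it lies in `I` by expanding `σ_λ` along its first row.
-/

open Finset Matrix

section PowerSeries

open PowerSeries

variable {R : Type*} [CommRing R]

lemma coeff_X_pow_mul_mk_intCast {a : ℤ → R} (ha : ∀ i < 0, a i = 0) (d n : ℕ) :
    coeff n (X ^ d * PowerSeries.mk fun i : ℕ => a i) = a (n - d) := by
  rw [coeff_X_pow_mul']
  split_ifs with h
  · rw [coeff_mk, Nat.cast_sub h]
  · rw [ha _ (by omega)]

lemma coeff_mul_eq_sum_fin {f : R⟦X⟧} {N n : ℕ} (hf : ∀ i, N ≤ i → i ≤ n → coeff i f = 0)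
    (g : R⟦X⟧) :
    coeff n (f * g) = ∑ i : Fin N, coeff i f * coeff n (X ^ (i : ℕ) * g) := by
  rw [Fin.sum_univ_eq_sum_range (fun i => coeff i f * coeff n (X ^ i * g)), coeff_mul,
    Finset.Nat.sum_antidiagonal_eq_sum_range_succ fun i j => coeff i f * coeff j g]
  simp only [coeff_X_pow_mul', mul_ite, mul_zero]
  rw [← Finset.sum_filter]
  symm
  refine Finset.sum_subset (fun i hi => ?_) fun i hi hi' => ?_
  · simp only [Finset.mem_filter, Finset.mem_range] at hi ⊢
    omega
  · simp only [Finset.mem_filter, Finset.mem_range] at hi hi'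
    rw [hf i (by omega) (by omega), zero_mul]

lemma coeff_mem_of_mul_eq_one {f g : R⟦X⟧} {m k : ℕ} {J : Ideal R}
    (hf₀ : constantCoeff f = 1) (hf : ∀ i, m < i → coeff i f = 0) (hfg : f * g = 1)
    (hJ : ∀ p, k < p → p ≤ m + k → coeff p g ∈ J) {p : ℕ} (hp : k < p) : coeff p g ∈ J := by
  induction p using Nat.strong_induction_on with
  | _ p ih =>
    rcases le_or_gt p (m + k) with hpm | hpm
    · exact hJ p hp hpm
    have hrec : coeff p g + ∑ i : Fin m, coeff (i + 1) f * coeff p (X ^ (i + 1 : ℕ) * g) = 0 := by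
      have h := coeff_mul_eq_sum_fin (N := m + 1) (n := p) (fun i hi _ => hf i hi) g
      rw [hfg, coeff_one, if_neg (by omega), Fin.sum_univ_succ] at h
      simpa [hf₀] using h.symm
    rw [eq_neg_of_add_eq_zero_left hrec]
    refine J.neg_mem (J.sum_mem fun i _ => J.mul_mem_left _ ?_)
    rw [coeff_X_pow_mul', if_pos (by omega)]
    exact ih _ (by omega) (by omega)

/-- The `n × n` upper triangular Toeplitz matrix `(f_{j-i})` of the coefficients of `f`; multiplying
by `X ^ i` shifts the coefficients without truncated subtraction. -/
noncomputable def toeplitz (n : ℕ) (f : R⟦X⟧) : Matrix (Fin n) (Fin n) R :=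
  of fun i j => coeff j (X ^ (i : ℕ) * f)

lemma toeplitz_one (n : ℕ) : toeplitz n (1 : R⟦X⟧) = 1 := by
  ext i j
  simp [toeplitz, coeff_X_pow, Matrix.one_apply, Fin.ext_iff, eq_comm]

lemma toeplitz_mul (n : ℕ) (f g : R⟦X⟧) : toeplitz n (f * g) = toeplitz n f * toeplitz n g := by
  ext i j
  simp only [toeplitz, Matrix.mul_apply, of_apply]
  rw [← mul_assoc]
  exact coeff_mul_eq_sum_fin (fun k hk hkj => by omega) g

lemma det_toeplitz (n : ℕ) (f : R⟦X⟧) : (toeplitz n f).det = constantCoeff f ^ n := by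
  rw [det_of_isUpperTriangular]
  · simp [toeplitz, coeff_X_pow_mul']
  · intro i j hij
    have : (j : ℕ) < i := hij
    simp only [toeplitz, of_apply]
    rw [coeff_X_pow_mul', if_neg (by omega)]

-- The minor is the cofactor of a corner of `toeplitz (p + 1) f`, whose inverse is
-- `toeplitz (p + 1) g`.
lemma det_coeff_succ_of_mul_eq_one {f g : R⟦X⟧} (hf₀ : constantCoeff f = 1) (hfg : f * g = 1)
    (p : ℕ) :
    (of fun i j : Fin p => coeff (j + 1) (X ^ (i : ℕ) * f)).det = (-1) ^ p * coeff p g := by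
  have hadj : adjugate (toeplitz (p + 1) f) = toeplitz (p + 1) g := by
    calc adjugate (toeplitz (p + 1) f)
        = adjugate (toeplitz (p + 1) f) * (toeplitz (p + 1) f * toeplitz (p + 1) g) := by
          rw [← toeplitz_mul, hfg, toeplitz_one, mul_one]
      _ = toeplitz (p + 1) g := by
          rw [← mul_assoc, adjugate_mul, det_toeplitz, hf₀, one_pow, one_smul, one_mul]
  have hcorner := congrFun (congrFun hadj 0) (Fin.last p)
  rw [adjugate_fin_succ_eq_det_submatrix, Fin.succAbove_last, Fin.succAbove_zero] at hcorner
  have hminor : (toeplitz (p + 1) f).submatrix Fin.castSucc Fin.succ =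
      of fun i j : Fin p => coeff (j + 1) (X ^ (i : ℕ) * f) := by
    ext i j
    simp [toeplitz]
  rw [hminor] at hcorner
  have hcoeff : toeplitz (p + 1) g 0 (Fin.last p) = coeff p g := by simp [toeplitz]
  rw [← hcoeff, ← hcorner, Fin.val_last, Fin.val_zero, add_zero, ← mul_assoc, ← mul_pow]
  simp

lemma rescale_C (a b : R) : rescale a (C b) = C b := by
  ext n
  simp +contextual [coeff_C]

lemma one_sub_C_mul_X_mul_mk_pow (a : R) :
    (1 - C a * X) * PowerSeries.mk (fun n => a ^ n) = 1 := by
  have h := congrArg (rescale a) (mk_one_mul_one_sub_eq_one R)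
  have hmk : rescale a (PowerSeries.mk 1) = PowerSeries.mk fun n => a ^ n := by
    ext n
    simp
  rwa [map_mul, map_sub, map_one, rescale_X, hmk, mul_comm] at h

lemma exists_mul_det_coeff_eq_det_pow {m : ℕ} {x : Fin m → R} {h : R⟦X⟧}
    (hx : (∏ l, (1 - C (x l) * X)) * h = 1) :
    ∃ v : R, ∀ b : Fin m → ℕ,
      (of fun i j : Fin m => coeff (b i) (X ^ (j.rev : ℕ) * h)).det * v =
        (of fun i l : Fin m => x l ^ b i).det := by
  let cofactor (l : Fin m) : Polynomial R :=
    ∏ l' ∈ univ.erase l, (1 - Polynomial.C (x l') * Polynomial.X)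
  have natDegree_cofactor (l : Fin m) : (cofactor l).natDegree < m := by
    calc (cofactor l).natDegree ≤ ∑ _l' ∈ univ.erase l, 1 :=
          (Polynomial.natDegree_prod_le _ _).trans
            (Finset.sum_le_sum fun _ _ => by compute_degree)
      _ < m := by simp [l.pos]
  have cofactor_mul (l : Fin m) :
      (cofactor l : R⟦X⟧) * h = PowerSeries.mk fun n => x l ^ n := by
    have hcoe : (cofactor l : R⟦X⟧) = ∏ l' ∈ univ.erase l, (1 - C (x l') * X) := by
      rw [← Polynomial.coeToPowerSeries.ringHom_apply, map_prod]
      simp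
    rw [← Finset.mul_prod_erase univ _ (Finset.mem_univ l), ← hcoe] at hx
    linear_combination (PowerSeries.mk fun n => x l ^ n) * hx -
      (cofactor l : R⟦X⟧) * h * one_sub_C_mul_X_mul_mk_pow (x l)
  refine ⟨(of fun j l : Fin m => (cofactor l).coeff j.rev).det, fun b => ?_⟩
  rw [← det_mul]
  congr 1
  ext i l
  have hcoeff : coeff (b i) ((cofactor l : R⟦X⟧) * h) = x l ^ b i := by
    rw [cofactor_mul, coeff_mk]
  rw [coeff_mul_eq_sum_fin (N := m) (fun d hd _ => by
    rw [Polynomial.coeff_coe, Polynomial.coeff_eq_zero_of_natDegree_lt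
      ((natDegree_cofactor l).trans_le hd)])] at hcoeff
  rw [Matrix.mul_apply, of_apply, ← hcoeff, ← Equiv.sum_comp Fin.revPerm]
  simp only [of_apply, Fin.revPerm_apply, Fin.rev_rev, Polynomial.coeff_coe, mul_comm]

end PowerSeries

section Alternant

open MvPolynomial

variable {ι : Type*} [Fintype ι] (R : Type*) [CommRing R]

lemma esymm_mul_prod_X_pow (r : ℕ) (b : ι → ℕ) :
    esymm ι R r * ∏ i, X i ^ b i =
      ∑ T ∈ powersetCard r (univ : Finset ι),
        ∏ i, X i ^ (b + (T : Set ι).indicator 1 : ι → ℕ) i := by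
  rw [esymm, Finset.sum_mul]
  refine Finset.sum_congr rfl fun T _ => ?_
  simp only [Pi.add_apply, pow_add, Finset.prod_mul_distrib]
  rw [mul_comm]
  classical
  simp [Set.indicator_apply, pow_ite]

variable [DecidableEq ι]

/-- The alternant `a_b = det (x_l ^ b_i)` in the variables `x_l`, the numerator of the Schur
polynomial of `λ` when `b = λ + δ`. -/
noncomputable def alternant (b : ι → ℕ) : MvPolynomial ι R :=
  (of fun i l => X l ^ b i).det

lemma alternant_eq_sum_rename (b : ι → ℕ) :
    alternant R b = ∑ p : Equiv.Perm ι, Equiv.Perm.sign p • rename p (∏ i, X i ^ b i) := by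
  rw [alternant, ← det_transpose, det_apply]
  simp

/-- **Pieri's rule** for alternants. -/
lemma esymm_mul_alternant (r : ℕ) (b : ι → ℕ) :
    esymm ι R r * alternant R b =
      ∑ T ∈ powersetCard r (univ : Finset ι), alternant R (b + (T : Set ι).indicator 1) := by
  simp only [alternant_eq_sum_rename]
  rw [Finset.sum_comm, Finset.mul_sum]
  refine Finset.sum_congr rfl fun p _ => ?_
  rw [mul_smul_comm, ← Finset.smul_sum, ← map_sum, ← esymm_mul_prod_X_pow, map_mul, rename_esymm]

lemma coeff_alternant {ι : Type*} [Fintype ι] [LinearOrder ι] {b b' : ι → ℕ} (hb : StrictAnti b)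
    (hb' : StrictAnti b') :
    coeff (Finsupp.equivFunOnFinite.symm b') (alternant R b) = if b = b' then 1 else 0 := by
  have coeff_rename (p : Equiv.Perm ι) :
      coeff (Finsupp.equivFunOnFinite.symm b') (rename p (∏ i, X i ^ b i : MvPolynomial ι R)) =
        if p = 1 ∧ b = b' then 1 else 0 := by
    have hmon : (∏ i, X i ^ b i : MvPolynomial ι R) =
        monomial (Finsupp.equivFunOnFinite.symm b) 1 := by
      rw [monomial_eq]
      simp [Finsupp.prod_fintype]
    rw [hmon, rename_monomial, coeff_monomial]
    refine if_congr ⟨fun h => ?_, fun h => ?_⟩ rfl rfl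
    · have hbp : b = b' ∘ p := by
        ext i
        simpa [Finsupp.mapDomain_equiv_apply] using DFunLike.congr_fun h (p i)
      have hbb : b = b' := (hb.range_inj hb').mp (by rw [hbp, p.surjective.range_comp])
      refine ⟨Equiv.ext fun i => hb'.injective ?_, hbb⟩
      exact (congrFun hbp i).symm.trans (congrFun hbb i)
    · simp [h.1, h.2, Finsupp.mapDomain_id]
  rw [alternant_eq_sum_rename, coeff_sum]
  simp only [Units.smul_def, coeff_smul, coeff_rename]
  by_cases h : b = b' <;> simp [h]

lemma linearIndepOn_alternant (ι : Type*) [Fintype ι] [LinearOrder ι] :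
    LinearIndepOn R (alternant R) {b : ι → ℕ | StrictAnti b} :=
  .of_pairwise_dual_eq_zero_one _ (fun b => lcoeff R (Finsupp.equivFunOnFinite.symm b.1))
    (fun b b' h => by
      simp [coeff_alternant R b'.2 b.2, Subtype.coe_injective.ne h.symm])
    (fun b => by rw [lcoeff_apply, coeff_alternant R b.2 b.2, if_pos rfl])

lemma alternant_ne_zero [Nontrivial R] {ι : Type*} [Fintype ι] [LinearOrder ι] {b : ι → ℕ}
    (hb : StrictAnti b) : alternant R b ≠ 0 :=
  (linearIndepOn_alternant R ι).ne_zero hb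

end Alternant

lemma mul_mem_of_forall_X_mul_mem {ι R : Type*} [CommSemiring R]
    {N : Submodule R (MvPolynomial ι R)} (hN : ∀ i, ∀ f ∈ N, MvPolynomial.X i * f ∈ N)
    (p : MvPolynomial ι R) {f : MvPolynomial ι R} (hf : f ∈ N) : p * f ∈ N := by
  induction p using MvPolynomial.induction_on generalizing f with
  | C a => simpa only [MvPolynomial.smul_eq_C_mul] using N.smul_mem a hf
  | add p q hp hq => simpa only [add_mul] using N.add_mem (hp hf) (hq hf)
  | mul_X p i hp => simpa only [mul_assoc] using hp (hN i f hf)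

section Sigma

variable (m : ℕ)

lemma cVar_of_neg {i : ℤ} (hi : i < 0) : cVar m i = 0 := by
  rw [cVar, dif_neg (by omega), if_neg (by omega)]

lemma cVar_of_lt {i : ℤ} (hi : (m : ℤ) < i) : cVar m i = 0 := by
  rw [cVar, dif_neg (by omega), if_neg (by omega)]

lemma cVar_zero : cVar m 0 = 1 := by
  simp [cVar]

lemma cVar_add_one (r : Fin m) : cVar m (r + 1) = MvPolynomial.X r := by
  rw [cVar, dif_pos (by omega)]
  simp

lemma sigmaP_of_neg {p : ℤ} (hp : p < 0) : sigmaP m p = 0 := by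
  rw [sigmaP, if_pos hp]

lemma sigmaP_natCast (p : ℕ) :
    sigmaP m p = (of fun i j : Fin p => cVar m (1 + (j : ℤ) - (i : ℤ))).det := by
  rw [sigmaP, if_neg (by omega)]
  rfl

lemma sigmaP_zero : sigmaP m 0 = 1 := by
  simp [sigmaP]

lemma sigmaL_single (n p : ℕ) : sigmaL m (Pi.single 0 p : Fin (n + 1) → ℕ) = sigmaP m p := by
  rw [sigmaL, det_of_isUpperTriangular]
  · simp [Fin.prod_univ_succ, sigmaP_zero]
  · intro i j hij
    have hi : i ≠ 0 := (Fin.zero_le j).trans_lt hij |>.ne'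
    have : (j : ℕ) < i := hij
    rw [of_apply, Pi.single_eq_of_ne hi, sigmaP_of_neg m (by omega)]

lemma sigmaL_zero (l : ℕ) : sigmaL m (0 : Fin l → ℕ) = 1 := by
  cases l with
  | zero => simp [sigmaL]
  | succ n => rw [← Pi.single_zero 0, sigmaL_single, Nat.cast_zero, sigmaP_zero]

lemma sigmaL_eq_zero_of_sub_eq {l : ℕ} {lam : Fin l → ℕ} {i j : Fin l} (hij : i ≠ j)
    (h : (lam i : ℤ) - i = lam j - j) : sigmaL m lam = 0 :=
  det_zero_of_row_eq hij <| funext fun t => by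
    simp only [of_apply]
    congr 1
    omega

lemma antitone_add_indicator_or_sigmaL_eq_zero {l : ℕ} {lam : Fin l → ℕ} (hlam : Antitone lam)
    (T : Set (Fin l)) :
    Antitone (lam + T.indicator 1) ∨ sigmaL m (lam + T.indicator 1) = 0 := by
  classical
  refine or_iff_not_imp_left.mpr fun hT => ?_
  obtain _ | n := l
  · exact absurd (Subsingleton.antitone _) hT
  obtain ⟨i, hi⟩ := not_forall.mp (Fin.antitone_iff_succ_le.not.mp hT)
  refine sigmaL_eq_zero_of_sub_eq m (Fin.castSucc_lt_succ (i := i)).ne ?_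
  have := hlam (Fin.castSucc_lt_succ (i := i)).le
  simp only [Pi.add_apply, Set.indicator_apply, Pi.one_apply, Fin.val_succ,
    Fin.val_castSucc] at hi ⊢
  split_ifs at hi ⊢ <;> omega

lemma sigmaL_mem_of_lt_head {n k : ℕ} {J : Ideal (MvPolynomial (Fin m) ℚ)}
    (hJ : ∀ p : ℤ, (k : ℤ) < p → sigmaP m p ∈ J) {lam : Fin (n + 1) → ℕ} (h : k < lam 0) :
    sigmaL m lam ∈ J := by
  rw [sigmaL, det_succ_row_zero]
  refine J.sum_mem fun j _ => J.mul_mem_right _ (J.mul_mem_left _ ?_)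
  rw [of_apply]
  refine hJ _ ?_
  rw [Fin.val_zero]
  omega

/-- The generating series `∑ c_i t^i`. -/
noncomputable def cSeries : PowerSeries (MvPolynomial (Fin m) ℚ) :=
  .mk fun i : ℕ => cVar m i

/-- The generating series `∑ σ_p t^p`, inverse to `∑ c_i (-t)^i`. -/
noncomputable def sigmaSeries : PowerSeries (MvPolynomial (Fin m) ℚ) :=
  .mk fun p : ℕ => sigmaP m p

lemma constantCoeff_cSeries : PowerSeries.constantCoeff (cSeries m) = 1 := by
  rw [← PowerSeries.coeff_zero_eq_constantCoeff_apply, cSeries, PowerSeries.coeff_mk, Nat.cast_zero,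
    cVar_zero]

lemma rescale_cSeries_mul_sigmaSeries :
    PowerSeries.rescale (-1) (cSeries m) * sigmaSeries m = 1 := by
  set g := PowerSeries.invOfUnit (cSeries m) 1
  have hg : cSeries m * g = 1 := PowerSeries.mul_invOfUnit _ _ (constantCoeff_cSeries m)
  suffices sigmaSeries m = PowerSeries.rescale (-1) g by rw [this, ← map_mul, hg, map_one]
  ext1 p
  rw [sigmaSeries, PowerSeries.coeff_mk, PowerSeries.coeff_rescale,
    ← det_coeff_succ_of_mul_eq_one (constantCoeff_cSeries m) hg, sigmaP_natCast]
  congr 1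
  ext1 i j
  rw [of_apply, of_apply, cSeries, coeff_X_pow_mul_mk_intCast fun _ => cVar_of_neg m]
  congr 1
  omega

/-- The homomorphism `c_i ↦ e_i(x_1, …, x_m)`, which identifies `S` with the symmetric polynomials.
The variables `c_{r+1}` and `x_{l+1}` are `X r` and `X l`. -/
noncomputable def cToEsymm : MvPolynomial (Fin m) ℚ →ₐ[ℚ] MvPolynomial (Fin m) ℚ :=
  (MvPolynomial.symmetricSubalgebra (Fin m) ℚ).val.comp (MvPolynomial.esymmAlgHom (Fin m) ℚ m)

lemma cToEsymm_injective : Function.Injective (cToEsymm m) :=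
  Subtype.val_injective.comp (MvPolynomial.esymmAlgHom_fin_injective ℚ le_rfl)

lemma cToEsymm_X (r : Fin m) :
    cToEsymm m (MvPolynomial.X r) = MvPolynomial.esymm (Fin m) ℚ (r + 1) := by
  simp [cToEsymm, MvPolynomial.esymmAlgHom_apply]

lemma cToEsymm_cVar (n : ℕ) : cToEsymm m (cVar m n) = MvPolynomial.esymm (Fin m) ℚ n := by
  rcases n with _ | r
  · simp [cVar_zero]
  rcases lt_or_ge r m with hr | hr
  · rw [Nat.cast_succ, cVar_add_one m ⟨r, hr⟩, cToEsymm_X]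
  · rw [cVar_of_lt m (by omega), map_zero, MvPolynomial.esymm,
      Finset.powersetCard_eq_empty.mpr (by simpa using Nat.lt_succ_of_le hr), Finset.sum_empty]

lemma map_cSeries : PowerSeries.mapAlgHom (cToEsymm m) (cSeries m) =
    ∏ l, (1 + PowerSeries.C (MvPolynomial.X l) * PowerSeries.X) := by
  ext1 n
  have hterm (T : Finset (Fin m)) :
      ∏ l ∈ T, PowerSeries.C (MvPolynomial.X l : MvPolynomial (Fin m) ℚ) * PowerSeries.X =
        PowerSeries.C (∏ l ∈ T, MvPolynomial.X l) * PowerSeries.X ^ #T := by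
    rw [Finset.prod_mul_distrib, map_prod, Finset.prod_const]
  rw [PowerSeries.mapAlgHom_apply, PowerSeries.coeff_map, cSeries, PowerSeries.coeff_mk,
    RingHom.coe_coe, cToEsymm_cVar, Finset.prod_one_add, map_sum, MvPolynomial.esymm,
    Finset.powersetCard_eq_filter, Finset.sum_filter]
  simp only [hterm, PowerSeries.coeff_C_mul_X_pow, eq_comm]

lemma prod_one_sub_mul_map_sigmaSeries :
    (∏ l : Fin m, (1 - PowerSeries.C (MvPolynomial.X l : MvPolynomial (Fin m) ℚ) * PowerSeries.X)) *
      PowerSeries.mapAlgHom (cToEsymm m) (sigmaSeries m) = 1 := by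
  have hprod :
      ∏ l : Fin m, (1 - PowerSeries.C (MvPolynomial.X l : MvPolynomial (Fin m) ℚ) * PowerSeries.X) =
        PowerSeries.mapAlgHom (cToEsymm m) (PowerSeries.rescale (-1) (cSeries m)) := by
    trans PowerSeries.rescale (-1) (PowerSeries.mapAlgHom (cToEsymm m) (cSeries m))
    · rw [map_cSeries]
      simp [PowerSeries.rescale_X, rescale_C, sub_eq_add_neg]
    · ext1 n
      simp [PowerSeries.mapAlgHom_apply]
  rw [hprod, ← map_mul, rescale_cSeries_mul_sigmaSeries, map_one]

/-- The exponent `δ = (m - 1, …, 1, 0)`, which turns partitions `λ` into strictly decreasing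
exponents `λ + δ`. -/
def staircase : Fin m → ℕ := fun i => i.rev

lemma strictAnti_add_staircase {lam : Fin m → ℕ} (hlam : Antitone lam) :
    StrictAnti (lam + staircase m) :=
  hlam.add_strictAnti fun _ _ h => Fin.rev_lt_rev.mpr h

lemma alternant_staircase_ne_zero : alternant ℚ (staircase m) ≠ 0 :=
  alternant_ne_zero ℚ fun _ _ h => Fin.rev_lt_rev.mpr h

lemma sigmaL_eq_det_coeff (lam : Fin m → ℕ) :
    sigmaL m lam = (of fun i j : Fin m => PowerSeries.coeff ((lam + staircase m) i)
      (PowerSeries.X ^ (j.rev : ℕ) * sigmaSeries m)).det := by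
  rw [sigmaL]
  congr 1
  ext1 i j
  rw [of_apply, of_apply, sigmaSeries, coeff_X_pow_mul_mk_intCast fun _ => sigmaP_of_neg m]
  congr 1
  simp only [Pi.add_apply, staircase, Fin.val_rev]
  omega

/-- The **bialternant formula** for Schur polynomials. -/
lemma cToEsymm_sigmaL_mul_alternant (lam : Fin m → ℕ) :
    cToEsymm m (sigmaL m lam) * alternant ℚ (staircase m) = alternant ℚ (lam + staircase m) := by
  obtain ⟨v, hv⟩ := exists_mul_det_coeff_eq_det_pow (prod_one_sub_mul_map_sigmaSeries m)
  have hmul (mu : Fin m → ℕ) :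
      cToEsymm m (sigmaL m mu) * v = alternant ℚ (mu + staircase m) := by
    rw [alternant, ← hv, sigmaL_eq_det_coeff, AlgHom.map_det]
    congr 2
    ext1 i j
    simp [PowerSeries.mapAlgHom_apply, PowerSeries.coeff_X_pow_mul', apply_ite (cToEsymm m)]
  have hv_eq : v = alternant ℚ (staircase m) := by
    simpa [sigmaL_zero] using hmul 0
  rw [← hv_eq, hmul]

lemma linearIndepOn_sigmaL : LinearIndepOn ℚ (sigmaL m) {lam : Fin m → ℕ | Antitone lam} := by
  refine .of_comp (LinearMap.mulRight ℚ (alternant ℚ (staircase m)) ∘ₗ (cToEsymm m).toLinearMap) ?_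
  have hcomp : ⇑(LinearMap.mulRight ℚ (alternant ℚ (staircase m)) ∘ₗ (cToEsymm m).toLinearMap) ∘
      sigmaL m = alternant ℚ ∘ (· + staircase m) :=
    funext (cToEsymm_sigmaL_mul_alternant m)
  rw [hcomp]
  refine LinearIndepOn.comp_of_image ((linearIndepOn_alternant ℚ (Fin m)).mono ?_)
    (add_left_injective _).injOn
  exact Set.image_subset_iff.mpr fun _ => strictAnti_add_staircase m

/-- **Pieri's rule** for the `σ_λ`. -/
lemma X_mul_sigmaL (r : Fin m) (lam : Fin m → ℕ) :
    MvPolynomial.X r * sigmaL m lam =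
      ∑ T ∈ powersetCard (r + 1) (univ : Finset (Fin m)),
        sigmaL m (lam + (T : Set (Fin m)).indicator 1) := by
  apply cToEsymm_injective m
  apply mul_right_cancel₀ (alternant_staircase_ne_zero m)
  rw [map_mul, mul_assoc, cToEsymm_sigmaL_mul_alternant, cToEsymm_X, esymm_mul_alternant, map_sum,
    Finset.sum_mul]
  refine Finset.sum_congr rfl fun T _ => ?_
  rw [cToEsymm_sigmaL_mul_alternant, add_right_comm]

variable (k : ℕ)

/-- The ideal `I = ⟨σ_{k+1}, …, σ_n⟩`, where `n = m + k`. -/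
noncomputable def sigmaIdeal : Ideal (MvPolynomial (Fin m) ℚ) :=
  Ideal.span (sigmaP m '' Set.Icc ((k : ℤ) + 1) (m + k))

/-- The partitions `λ` with `ℓ(λ) ≤ m` and `λ_1 > k`, padded with zeros to length `m`. -/
def largePartitions : Set (Fin m → ℕ) := {lam | Antitone lam ∧ ∃ i, k < lam i}

lemma sigmaP_mem_sigmaIdeal {p : ℤ} (hp : (k : ℤ) < p) : sigmaP m p ∈ sigmaIdeal m k := by
  lift p to ℕ using by omega
  have hcoeff (q : ℕ) : PowerSeries.coeff q (sigmaSeries m) = sigmaP m q := PowerSeries.coeff_mk _ _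
  rw [← hcoeff]
  refine coeff_mem_of_mul_eq_one (m := m) (k := k) ?_ (fun i hi => ?_)
    (rescale_cSeries_mul_sigmaSeries m) (fun q hkq hq => ?_) (by omega)
  · rw [← PowerSeries.coeff_zero_eq_constantCoeff_apply, PowerSeries.coeff_rescale, pow_zero,
      one_mul, PowerSeries.coeff_zero_eq_constantCoeff_apply, constantCoeff_cSeries]
  · rw [PowerSeries.coeff_rescale, cSeries, PowerSeries.coeff_mk, cVar_of_lt m (by omega), mul_zero]
  · rw [hcoeff]
    exact Ideal.subset_span ⟨q, ⟨by omega, by omega⟩, rfl⟩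

lemma X_mul_mem_span_sigmaL (r : Fin m) {f : MvPolynomial (Fin m) ℚ}
    (hf : f ∈ Submodule.span ℚ (sigmaL m '' largePartitions m k)) :
    MvPolynomial.X r * f ∈ Submodule.span ℚ (sigmaL m '' largePartitions m k) := by
  suffices Submodule.span ℚ (sigmaL m '' largePartitions m k) ≤
      (Submodule.span ℚ (sigmaL m '' largePartitions m k)).comap
        (LinearMap.mulLeft ℚ (MvPolynomial.X r)) from this hf
  refine Submodule.span_le.mpr (Set.image_subset_iff.mpr fun lam ⟨hlam, i, hi⟩ => ?_)
  change MvPolynomial.X r * sigmaL m lam ∈ Submodule.span ℚ (sigmaL m '' largePartitions m k)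
  rw [X_mul_sigmaL]
  refine Submodule.sum_mem _ fun T _ => ?_
  rcases antitone_add_indicator_or_sigmaL_eq_zero m hlam T with hT | hT
  · exact Submodule.subset_span ⟨_, ⟨hT, i, hi.trans_le (Nat.le_add_right _ _)⟩, rfl⟩
  · exact hT ▸ Submodule.zero_mem _

lemma sigmaL_mem_sigmaIdeal {lam : Fin m → ℕ} (hlam : lam ∈ largePartitions m k) :
    sigmaL m lam ∈ sigmaIdeal m k := by
  obtain ⟨hanti, i, hi⟩ := hlam
  obtain ⟨n, rfl⟩ := Nat.exists_eq_add_one.mpr i.pos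
  exact sigmaL_mem_of_lt_head _ (fun _ => sigmaP_mem_sigmaIdeal _ k)
    (hi.trans_le (hanti (Fin.zero_le i)))

variable {m} in
lemma sigmaP_mem_span_sigmaL (hm : 0 < m) {p : ℕ} (hp : k < p) :
    sigmaP m p ∈ Submodule.span ℚ (sigmaL m '' largePartitions m k) := by
  obtain ⟨n, rfl⟩ := Nat.exists_eq_add_one.mpr hm
  rw [← sigmaL_single (n + 1) n]
  refine Submodule.subset_span ⟨_, ⟨fun i j hij => ?_, 0, by simpa⟩, rfl⟩
  rcases eq_or_ne j 0 with rfl | hj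
  · rw [Fin.le_zero_iff.mp hij]
  · simp [hj]

lemma span_sigmaL_eq_sigmaIdeal :
    Submodule.span ℚ (sigmaL m '' largePartitions m k) =
      (sigmaIdeal m k).restrictScalars ℚ := by
  refine le_antisymm (Submodule.span_le.mpr <| Set.image_subset_iff.mpr fun lam hlam =>
    sigmaL_mem_sigmaIdeal m k hlam) ?_
  let spanIdeal : Ideal (MvPolynomial (Fin m) ℚ) :=
    { Submodule.span ℚ (sigmaL m '' largePartitions m k) with
      smul_mem' := fun f _ hg =>
        mul_mem_of_forall_X_mul_mem (fun r _ => X_mul_mem_span_sigmaL m k r) f hg }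
  have hle : sigmaIdeal m k ≤ spanIdeal := by
    refine Ideal.span_le.mpr (Set.image_subset_iff.mpr fun p hp => ?_)
    rw [Set.mem_Icc] at hp
    lift p to ℕ using by omega
    exact sigmaP_mem_span_sigmaL k (by omega) (by omega)
  exact hle

end Sigma

/-- The ideal `I = ⟨σ_{k+1}, …, σ_n⟩` of `S = ℚ[c_1, …, c_m]` (with `n = m + k`)
contains `σ_p` for all `p > k`, and as a `ℚ`-vector space it has a basis consisting
of all `σ_λ` with `ℓ(λ) ≤ m` and `λ_1 > k` (encoded as weakly decreasing
`m`-tuples with some part `> k`). -/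
theorem sigma_ideal_basis (m k : ℕ) (hm : 0 < m) (hk : 0 < k) :
    (∀ p : ℤ, (k : ℤ) < p →
      sigmaP m p ∈
        Ideal.span ((fun p : ℤ => sigmaP m p) '' Set.Icc ((k : ℤ) + 1) ((m : ℤ) + k))) ∧
    LinearIndependent ℚ
      (fun lam : {lam : Fin m → ℕ //
          (∀ i j : Fin m, i ≤ j → lam j ≤ lam i) ∧ ∃ i, k < lam i} =>
        sigmaL m lam.1) ∧
    Submodule.span ℚ
      (Set.range fun lam : {lam : Fin m → ℕ //
          (∀ i j : Fin m, i ≤ j → lam j ≤ lam i) ∧ ∃ i, k < lam i} =>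
        sigmaL m lam.1) =
      Submodule.restrictScalars ℚ
        (Ideal.span ((fun p : ℤ => sigmaP m p) '' Set.Icc ((k : ℤ) + 1) ((m : ℤ) + k))) := by
  refine ⟨fun _ => sigmaP_mem_sigmaIdeal m k, ?_, ?_⟩
  · exact (linearIndepOn_sigmaL m).mono (t := largePartitions m k) fun _ hlam => hlam.1
  · have hspan := span_sigmaL_eq_sigmaIdeal m k
    rwa [Set.image_eq_range] at hspan
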